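/- Let q⁰, q¹, …, qᵐ be pairwise mutually singular probability measures on a measurable space X and let λ ∈ ℝ₊ᵐ with λᵢ > 0 for all i. Define the mixture q_mix^{(λ)} = (q⁰ + Σⱼ λⱼ qʲ)/(1 + Σⱼ λⱼ). Then KL(qⁱ‖q_mix^{(λ)}) = log((1 + Σⱼ λⱼ)/λᵢ) for every i = 1, …, m, and KL(q⁰‖q_mix^{(λ)}) = log(1 + Σⱼ λⱼ). -/

import Mathlib

open MeasureTheory

/-- The Kullback–Leibler divergence `KL(μ‖ν)`, with values in `EReal`. -/
noncomputable def KL {X : Type*} [MeasurableSpace X] (μ ν : Measure X) : EReal :=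
  open Classical in
  if μ ≪ ν ∧ Integrable (llr μ ν) μ then ((∫ x, llr μ ν x ∂μ : ℝ) : EReal) else ⊤

/-- The mixture distribution `q_mix^{(λ)} = (q⁰ + ∑ i, λ i • qⁱ) / (1 + ∑ i, λ i)`. -/
noncomputable def qMix {X : Type*} [MeasurableSpace X] {m : ℕ}
    (q0 : Measure X) (qi : Fin m → Measure X) (l : Fin m → ℝ) : Measure X :=
  (ENNReal.ofReal (1 + ∑ i, l i))⁻¹ • (q0 + ∑ i, ENNReal.ofReal (l i) • qi i)

lemma KL_aux {X : Type*} [MeasurableSpace X] (μ ρ : Measure X) [IsProbabilityMeasure μ]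
    [IsFiniteMeasure ρ] (h : μ ⟂ₘ ρ) (b : ℝ) (hb : 0 < b) :
    KL μ (ENNReal.ofReal b • μ + ρ) = ((Real.log b⁻¹ : ℝ) : EReal) := by
  obtain ⟨S, hS, hμ, hρ⟩ := h
  have hb0 : ENNReal.ofReal b ≠ 0 := by simpa using hb
  set K := ENNReal.ofReal b • μ + ρ with hK
  have : IsFiniteMeasure (ENNReal.ofReal b • μ) := Measure.smul_finite _ ENNReal.ofReal_ne_top
  have : IsFiniteMeasure K := by rw [hK]; infer_instance
  have hae : ∀ᵐ x ∂μ, x ∈ Sᶜ := by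
    rw [ae_iff]; simpa using hμ
  have hw : K.withDensity (Sᶜ.indicator fun _ => (ENNReal.ofReal b)⁻¹) = μ := by
    rw [withDensity_indicator hS.compl, withDensity_const, hK, Measure.restrict_add,
      Measure.restrict_smul, Measure.restrict_eq_zero.2 hρ, Measure.restrict_eq_self_of_ae_mem hae,
      add_zero, smul_smul, ENNReal.inv_mul_cancel hb0 ENNReal.ofReal_ne_top, one_smul]
  have hac : μ ≪ K := by
    rw [← hw]; exact withDensity_absolutelyContinuous _ _
  have hrn : μ.rnDeriv K =ᵐ[K] Sᶜ.indicator fun _ => (ENNReal.ofReal b)⁻¹ := by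
    have := Measure.rnDeriv_withDensity K
      (f := Sᶜ.indicator fun _ => (ENNReal.ofReal b)⁻¹) (measurable_const.indicator hS.compl)
    rwa [hw] at this
  have hll : llr μ K =ᵐ[μ] fun _ => Real.log b⁻¹ := by
    filter_upwards [hac.ae_le hrn, hae] with x hx hxS
    rw [llr, hx, Set.indicator_of_mem hxS, ENNReal.toReal_inv, ENNReal.toReal_ofReal hb.le]
  have hint : Integrable (llr μ K) μ := (integrable_congr hll).2 (integrable_const _)
  rw [KL, if_pos ⟨hac, hint⟩, integral_congr_ae hll]
  simp

/-- for pairwise mutually singular probability measures `q⁰, q¹, …, qᵐ` and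
`λ` with strictly positive entries, `KL(qⁱ‖q_mix^{(λ)}) = log((1 + ∑ j λⱼ)/λᵢ)` for
`i = 1, …, m`, and `KL(q⁰‖q_mix^{(λ)}) = log(1 + ∑ j λⱼ)`. -/
theorem stmt6 {X : Type*} [MeasurableSpace X] {m : ℕ}
    (q0 : Measure X) [IsProbabilityMeasure q0]
    (qi : Fin m → Measure X) (hqi : ∀ i, IsProbabilityMeasure (qi i))
    (hsing0 : ∀ i, q0 ⟂ₘ qi i)
    (hsing : Pairwise fun i j => qi i ⟂ₘ qi j)
    (l : Fin m → ℝ) (hl : ∀ i, 0 < l i) :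
    (∀ i, KL (qi i) (qMix q0 qi l) = ((Real.log ((1 + ∑ j, l j) / l i) : ℝ) : EReal)) ∧
    KL q0 (qMix q0 qi l) = ((Real.log (1 + ∑ j, l j) : ℝ) : EReal) := by
  have hs : 0 < 1 + ∑ j, l j := by
    have := Finset.sum_nonneg (s := Finset.univ) (fun j _ => (hl j).le)
    linarith
  have hfin : ∀ j, IsFiniteMeasure (ENNReal.ofReal (l j) • qi j) :=
    fun j => Measure.smul_finite _ ENNReal.ofReal_ne_top
  have hc : (ENNReal.ofReal (1 + ∑ i, l i))⁻¹ ≠ ⊤ := by simpa using hs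
  have hsum : ∀ s : Finset (Fin m), IsFiniteMeasure (∑ j ∈ s, ENNReal.ofReal (l j) • qi j) := by
    intro s
    infer_instance
  have hms : ∀ (μ : Measure X) (s : Finset (Fin m)), (∀ j ∈ s, μ ⟂ₘ qi j) →
      μ ⟂ₘ ∑ j ∈ s, ENNReal.ofReal (l j) • qi j := by
    intro μ s
    induction s using Finset.induction_on with
    | empty => intro _; simp
    | insert a s ha ih =>
      intro h
      rw [Finset.sum_insert ha]
      exact ((h a (by simp)).symm.smul _).symm.add_right
        (ih fun j hj => h j (Finset.mem_insert_of_mem hj))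
  constructor
  · intro i
    have := hqi i
    have hmix : qMix q0 qi l = ENNReal.ofReal (l i / (1 + ∑ j, l j)) • qi i +
        (ENNReal.ofReal (1 + ∑ i, l i))⁻¹ •
          (q0 + ∑ j ∈ Finset.univ.erase i, ENNReal.ofReal (l j) • qi j) := by
      rw [qMix, ← Finset.add_sum_erase Finset.univ (fun j => ENNReal.ofReal (l j) • qi j)
        (Finset.mem_univ i), add_left_comm, smul_add,
        smul_smul, ENNReal.ofReal_div_of_pos hs, ENNReal.div_eq_inv_mul]
    have hf := Measure.smul_finite
      (q0 + ∑ j ∈ Finset.univ.erase i, ENNReal.ofReal (l j) • qi j) hc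
    rw [hmix, KL_aux _ _ _ _ (div_pos (hl i) hs), inv_div]
    refine Measure.MutuallySingular.symm (Measure.MutuallySingular.smul _ ?_)
    refine ((hsing0 i).symm.add_right (hms _ _ fun j hj => hsing ?_)).symm
    exact (Finset.ne_of_mem_erase hj).symm
  · have hmix : qMix q0 qi l = ENNReal.ofReal ((1 + ∑ j, l j)⁻¹) • q0 +
        (ENNReal.ofReal (1 + ∑ i, l i))⁻¹ • (∑ j, ENNReal.ofReal (l j) • qi j) := by
      rw [qMix, smul_add, ENNReal.ofReal_inv_of_pos hs]
    have hf := Measure.smul_finite (∑ j, ENNReal.ofReal (l j) • qi j) hc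
    rw [hmix, KL_aux _ _ _ _ (inv_pos.2 hs), inv_inv]
    exact ((hms _ _ fun j _ => hsing0 j).symm.smul _).symm
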